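/- Let k be a positive integer and let G be a connected K_{1,4}-free simple graph of order n. If every independent set of k+3 vertices in G has degree sum at least n−k, then G has a spanning tree with at most k branch vertices. -/

import Mathlib

open SimpleGraph Finset List

open scoped Classical

variable {V : Type*}

/-- `G` contains no induced copy of `K_{1,4}` (a star with four edges). -/
def K14Free (G : SimpleGraph V) : Prop :=
  ¬ ∃ c a b d e : V, a ≠ b ∧ a ≠ d ∧ a ≠ e ∧ b ≠ d ∧ b ≠ e ∧ d ≠ e ∧
    G.Adj c a ∧ G.Adj c b ∧ G.Adj c d ∧ G.Adj c e ∧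
    ¬G.Adj a b ∧ ¬G.Adj a d ∧ ¬G.Adj a e ∧ ¬G.Adj b d ∧ ¬G.Adj b e ∧ ¬G.Adj d e

/-- `s` is an independent set of vertices of `G`. -/
def IsIndepFinset (G : SimpleGraph V) (s : Finset V) : Prop :=
  ∀ u ∈ s, ∀ v ∈ s, u ≠ v → ¬G.Adj u v

/-- The set `L(T)` of leaves (vertices of degree one) of `T`. -/
noncomputable def leafSet [Fintype V] (T : SimpleGraph V) : Finset V :=
  Finset.univ.filter fun v => T.degree v = 1

/-- The set `B(T)` of branch vertices (vertices of degree at least three) of `T`. -/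
noncomputable def branchSet [Fintype V] (T : SimpleGraph V) : Finset V :=
  Finset.univ.filter fun v => 3 ≤ T.degree v

/-- `v` is an oblique neighbor of the edge `e` with respect to the (spanning) tree `T` of `G`:
`e = s(a,b)` where `b` is the endpoint of `e` farthest from `v` in `T`, and `v b ∈ E(G)`. -/
def IsObliqueNbr (G T : SimpleGraph V) (e : Sym2 V) (v : V) : Prop :=
  ∃ a b : V, e = s(a, b) ∧ T.dist v a < T.dist v b ∧ G.Adj v b

/-- The number of vertices of the reducible stem `R_Stem(T)` of `T`: a vertex `v` survives
iff for every leaf `x` of `T` the (unique) path of `T` from `x` to `v` contains a branch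
vertex (so exactly the vertices not lying strictly before the first branch vertex on the
path leaving some leaf). -/
noncomputable def rstemCard [Fintype V] (T : SimpleGraph V) : ℕ :=
  {v : V | ∀ x : V, T.degree x = 1 → ∀ p : T.Walk x v, p.IsPath →
    ∃ w ∈ p.support, 3 ≤ T.degree w}.ncard

/-!
Among the connected spanning subgraphs of `G` choose `T` minimising the number of branch vertices
and then the total excess of the degrees over two; suppose that it has `b > k` branch vertices. An
exchange of edges that raises only degrees of leaves cannot create a branch vertex, so it cannot
lower any degree above two either. Hence `T` is a tree, its leaves are independent in `G`, and,
because `G` is `K_{1,4}`-free, each edge of `T` has at most one oblique leaf, that is, at most one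
leaf adjacent in `G` to the endpoint farther from it.

The path of `T` that starts at a leaf `x` first meets a branch vertex `p`. If `x` is stray, that is,
adjacent in `G` to another branch vertex, then this path can be rerouted to end there. Rerouting
`deg p - 2` of the paths that end at `p` would remove `p` from the branch vertices, so at most
`deg p - 3` of them belong to stray leaves, which leaves at least `b + 2 ≥ k + 3` leaves that are
not stray.

Let `S` consist of `k + 3` of these. Sending an edge `xv` of `G` with `x ∈ S` to the edge of `T` at
`v` in the direction of `x` is injective, and its values avoid the `b - 1` edges of `T` at the
branch vertices in the direction of a fixed branch vertex. So the degree sum of `S` is at most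
`(n - 1) - (b - 1) = n - b < n - k`.
-/

/-! ### Sides of an edge -/

/-- The side of `a` with respect to the edge `ab` of `T`: the vertex set of the component of
`T - ab` containing `a`. It is how the position of a vertex relative to an edge of a tree is
expressed throughout. -/
def edgeSide (T : SimpleGraph V) (a b : V) : Set V :=
  {w | (T.deleteEdges {s(a, b)}).Reachable a w}

section EdgeSide

variable {T : SimpleGraph V} {a b v w : V}

lemma left_mem_edgeSide (T : SimpleGraph V) (a b : V) : a ∈ edgeSide T a b :=
  Reachable.refl a

lemma disjoint_edgeSide_swap (hT : T.IsAcyclic) (hab : T.Adj a b) :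
    Disjoint (edgeSide T a b) (edgeSide T b a) := by
  rw [Set.disjoint_left]
  intro w (hwa : (T.deleteEdges {s(a, b)}).Reachable a w)
    (hwb : (T.deleteEdges {s(b, a)}).Reachable b w)
  rw [Sym2.eq_swap] at hwb
  exact isBridge_iff.1 (isAcyclic_iff_forall_adj_isBridge.1 hT hab) (hwa.trans hwb.symm)

lemma right_notMem_edgeSide (hT : T.IsAcyclic) (hab : T.Adj a b) : b ∉ edgeSide T a b :=
  fun hb => Set.disjoint_left.1 (disjoint_edgeSide_swap hT hab) hb (left_mem_edgeSide T b a)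

lemma edgeSide_subset_edgeSide (hT : T.IsAcyclic) (hav : T.Adj a v) (hab : a ≠ b) :
    edgeSide T a v ⊆ edgeSide T v b := by
  rintro w ⟨p⟩
  have hva : (T.deleteEdges {s(v, b)}).Adj v a := by
    simp [hav.symm, hab, hav.ne]
  -- A walk avoiding `av` that starts at `a` never meets `v`, hence it avoids `vb` as well.
  refine hva.reachable.trans ⟨p.transfer _ fun e he => ?_⟩
  have heT := p.edges_subset_edgeSet he
  rw [edgeSet_deleteEdges] at heT ⊢
  refine ⟨heT.1, ?_⟩
  rintro rfl
  exact right_notMem_edgeSide hT hav ⟨p.takeUntil v (p.fst_mem_support_of_mem_edges he)⟩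

lemma eq_of_mem_edgeSide (hT : T.IsAcyclic) (hav : T.Adj a v) (hbv : T.Adj b v)
    (ha : w ∈ edgeSide T a v) (hb : w ∈ edgeSide T b v) : a = b := by
  by_contra hab
  exact Set.disjoint_left.1 (disjoint_edgeSide_swap hT hbv) hb
    (edgeSide_subset_edgeSide hT hav hab ha)

lemma exists_adj_mem_edgeSide (hT : T.Connected) (hvw : v ≠ w) :
    ∃ a, T.Adj a v ∧ w ∈ edgeSide T a v := by
  obtain ⟨p, hp⟩ := (hT v w).exists_isPath
  cases p with
  | nil => exact absurd rfl hvw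
  | @cons _ a _ hva p =>
    refine ⟨a, hva.symm, ⟨p.toDeleteEdge _ fun he => ?_⟩⟩
    exact ((Walk.cons_isPath_iff _ _).1 hp).2 (Walk.snd_mem_support_of_mem_edges _ he)

lemma mem_edgeSide_or_mem_edgeSide_swap (hT : T.IsTree) (a b w : V) :
    w ∈ edgeSide T a b ∨ w ∈ edgeSide T b a := by
  by_cases haw : a = w
  · exact .inl (haw ▸ left_mem_edgeSide T a b)
  obtain ⟨c, hca, hwc⟩ := exists_adj_mem_edgeSide hT.connected haw
  by_cases hcb : c = b
  · exact .inr (hcb ▸ hwc)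
  · exact .inl (edgeSide_subset_edgeSide hT.isAcyclic hca hcb hwc)

lemma edgeSide_eq_singleton_of_degree_eq_one [Fintype (T.neighborSet a)] (ha : T.degree a = 1)
    (hab : T.Adj a b) : edgeSide T a b = {a} := by
  refine Set.eq_singleton_iff_unique_mem.2 ⟨left_mem_edgeSide T a b, fun w ⟨p⟩ => ?_⟩
  cases p with
  | nil => rfl
  | cons hac _ =>
    rw [deleteEdges_adj] at hac
    obtain rfl := (degree_eq_one_iff_existsUnique_adj.1 ha).unique hab hac.1
    exact absurd rfl hac.2

lemma reachable_deleteEdges_of_mem_edgeSide {u : V} (hu : u ∈ edgeSide T a b)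
    (hw : w ∈ edgeSide T a b) : (T.deleteEdges {s(a, b)}).Reachable u w :=
  Reachable.trans (Reachable.symm hu) hw

lemma reachable_deleteEdges_of_adj {u : V} (hT : T.IsAcyclic) (hav : T.Adj a v)
    (hu : u ∈ edgeSide T a v) (hw : w ∈ edgeSide T a v) (b : V) :
    (T.deleteEdges {s(b, v)}).Reachable u w := by
  by_cases hab : a = b
  · exact hab ▸ reachable_deleteEdges_of_mem_edgeSide hu hw
  · have hsub := edgeSide_subset_edgeSide hT hav hab
    exact Sym2.eq_swap ▸ reachable_deleteEdges_of_mem_edgeSide (hsub hu) (hsub hw)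

lemma reachable_deleteEdges_of_forall {u : V} (hT : T.IsAcyclic) (huw : T.Reachable u w)
    {F : Set (Sym2 V)} (hF : ∀ e ∈ F, (T.deleteEdges {e}).Reachable u w) :
    (T.deleteEdges F).Reachable u w := by
  obtain ⟨p, hp⟩ := huw.exists_isPath
  refine ⟨p.toDeleteEdges F fun e hep heF => ?_⟩
  obtain ⟨q, hq⟩ := (hF e heF).exists_isPath
  have hqp : q.mapLe (deleteEdges_le _) = p :=
    congrArg Subtype.val ((hT.subsingleton_path u w).elim ⟨_, hq.mapLe _⟩ ⟨p, hp⟩)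
  rw [← hqp, Walk.edges_mapLe_eq_edges] at hep
  have heq := q.edges_subset_edgeSet hep
  rw [edgeSet_deleteEdges] at heq
  exact heq.2 rfl

/-- The neighbour of `v` on the path of the tree `T` from `v` to `w` (and `v` itself where there
is none). It assigns to a vertex `w ≠ v` the edge at `v` leading to `w`. -/
noncomputable def toward (T : SimpleGraph V) (v w : V) : V :=
  if h : ∃ a, T.Adj a v ∧ w ∈ edgeSide T a v then h.choose else v

lemma toward_spec (hT : T.Connected) (hvw : v ≠ w) :
    T.Adj (toward T v w) v ∧ w ∈ edgeSide T (toward T v w) v := by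
  have h := exists_adj_mem_edgeSide hT hvw
  rw [toward, dif_pos h]
  exact h.choose_spec

lemma mk_toward_eq_mk_toward (hT : T.Connected) {v' w' : V} (hvw : v ≠ w) (hvw' : v' ≠ w')
    (h : s(v, toward T v w) = s(v', toward T v' w')) :
    v = v' ∧ toward T v w = toward T v' w' ∨
      T.Adj v' v ∧ w ∈ edgeSide T v' v ∧ w' ∈ edgeSide T v v' := by
  obtain ⟨hadj, hw⟩ := toward_spec hT hvw
  obtain ⟨-, hw'⟩ := toward_spec hT hvw'
  rcases Sym2.eq_iff.1 h with h | ⟨hv, hv'⟩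
  · exact .inl h
  · rw [hv'] at hadj hw
    rw [← hv] at hw'
    exact .inr ⟨hadj, hw, hw'⟩

lemma injOn_mk_toward (hT : T.IsTree) (r : V) :
    Set.InjOn (fun v => s(v, toward T v r)) {r}ᶜ := by
  intro v hv w hw hvw
  rcases mk_toward_eq_mk_toward hT.connected hv hw hvw with ⟨h, -⟩ | ⟨hadj, hrw, hrv⟩
  · exact h
  · exact absurd hrv (Set.disjoint_left.1 (disjoint_edgeSide_swap hT.isAcyclic hadj) hrw)

end EdgeSide

/-! ### Degrees -/

lemma three_le_degree_of_adj {T : SimpleGraph V} {v a b c : V} [Fintype (T.neighborSet v)]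
    (ha : T.Adj v a) (hb : T.Adj v b) (hc : T.Adj v c) (hab : a ≠ b) (hac : a ≠ c)
    (hbc : b ≠ c) : 3 ≤ T.degree v :=
  Finset.two_lt_card.2 ⟨a, by simpa, b, by simpa, c, by simpa, hab, hac, hbc⟩

lemma exists_adj_ne_of_degree_ne_one {T : SimpleGraph V} {v a : V} [Fintype (T.neighborSet v)]
    (ha : T.Adj v a) (hv : T.degree v ≠ 1) : ∃ b, T.Adj v b ∧ b ≠ a := by
  by_contra! h
  exact hv (degree_eq_one_iff_existsUnique_adj.2 ⟨a, ha, h⟩)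

/-! ### Edge exchanges -/

section Exchange

variable {G T : SimpleGraph V} {F A : Finset (Sym2 V)} {a b c u v x : V}

/-- The graph `T - F + A` obtained from `T` by deleting the edges in `F`, then adding those
in `A`. -/
def exchangeEdges (T : SimpleGraph V) (F A : Finset (Sym2 V)) : SimpleGraph V :=
  T.deleteEdges F ⊔ fromEdgeSet A

/-- The number of edges in `E` incident with `v`, used to compare degrees before and after an
exchange. -/
noncomputable def incidenceCount (E : Finset (Sym2 V)) (v : V) : ℕ :=
  #{e ∈ E | v ∈ e}

lemma incidenceCount_singleton (e : Sym2 V) (v : V) :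
    incidenceCount {e} v = if v ∈ e then 1 else 0 := by
  simp only [incidenceCount, Finset.filter_singleton]
  split_ifs <;> simp

lemma incidenceCount_insert {E : Finset (Sym2 V)} {e : Sym2 V} (he : e ∉ E) (v : V) :
    incidenceCount (insert e E) v = (if v ∈ e then 1 else 0) + incidenceCount E v := by
  simp only [incidenceCount, Finset.filter_insert]
  split_ifs
  · rw [Finset.card_insert_of_notMem (by simp [he]), add_comm]
  · rw [zero_add]

lemma incidenceCount_insert_le (E : Finset (Sym2 V)) (e : Sym2 V) (v : V) :
    incidenceCount (insert e E) v ≤ (if v ∈ e then 1 else 0) + incidenceCount E v := by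
  by_cases he : e ∈ E
  · rw [Finset.insert_eq_of_mem he]
    exact Nat.le_add_left _ _
  · exact (incidenceCount_insert he v).le

lemma exchangeEdges_le (hT : T ≤ G) (hA : (A : Set (Sym2 V)) ⊆ G.edgeSet) :
    exchangeEdges T F A ≤ G :=
  sup_le ((deleteEdges_le _).trans hT) <| (fromEdgeSet_le (G := G)).2 fun _ he => hA he.1

lemma exchangeEdges_adj_of_mem (h : s(u, v) ∈ A) (huv : u ≠ v) :
    (exchangeEdges T F A).Adj u v :=
  .inr ((fromEdgeSet_adj _).2 ⟨h, huv⟩)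

lemma reachable_exchangeEdges (h : (T.deleteEdges F).Reachable u v) :
    (exchangeEdges T F A).Reachable u v :=
  h.mono le_sup_left

lemma connected_exchangeEdges (hT : T.Connected)
    (hF : ∀ a b, s(a, b) ∈ F → (exchangeEdges T F A).Reachable a b) :
    (exchangeEdges T F A).Connected := by
  have hadj (a b : V) (hab : T.Adj a b) : (exchangeEdges T F A).Reachable a b := by
    by_cases h : s(a, b) ∈ F
    · exact hF a b h
    · exact reachable_exchangeEdges (Adj.reachable (deleteEdges_adj.2 ⟨hab, h⟩))
  have := hT.nonempty
  refine Connected.mk fun u v => ?_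
  obtain ⟨p⟩ := hT u v
  induction p with
  | nil => exact Reachable.refl _
  | cons h _ ih => exact (hadj _ _ h).trans ih

lemma connected_exchangeEdges_singleton (hT : T.Connected) (hx : x ∈ edgeSide T a b)
    (hxb : x ≠ b) : (exchangeEdges T {s(a, b)} {s(x, b)}).Connected := by
  have hab : (exchangeEdges T {s(a, b)} {s(x, b)}).Reachable a b :=
    (reachable_exchangeEdges (by rwa [Finset.coe_singleton])).trans
      (exchangeEdges_adj_of_mem (by simp) hxb).reachable
  refine connected_exchangeEdges hT fun u v huv => ?_
  rcases Sym2.eq_iff.1 (Finset.mem_singleton.1 huv) with ⟨rfl, rfl⟩ | ⟨rfl, rfl⟩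
  exacts [hab, hab.symm]

lemma connected_exchangeEdges_pair (hT : T.IsTree) (hab : T.Adj a b) (hbc : T.Adj b c)
    (hac : a ≠ c) (hx : x ∈ edgeSide T a b) (hxb : x ≠ b) :
    (exchangeEdges T {s(a, b), s(b, c)} {s(a, c), s(x, b)}).Connected := by
  set K := exchangeEdges T {s(a, b), s(b, c)} {s(a, c), s(x, b)}
  have hax : K.Reachable a x := by
    refine reachable_exchangeEdges (reachable_deleteEdges_of_forall hT.isAcyclic
      (hT.connected a x) ?_)
    rintro e he
    rcases (by simpa using he : e = s(a, b) ∨ e = s(b, c)) with rfl | rfl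
    · exact hx
    · rw [Sym2.eq_swap]
      exact reachable_deleteEdges_of_adj hT.isAcyclic hab (left_mem_edgeSide T a b) hx c
  have hKab : K.Reachable a b := hax.trans (exchangeEdges_adj_of_mem (by simp) hxb).reachable
  have hKbc : K.Reachable b c :=
    hKab.symm.trans (exchangeEdges_adj_of_mem (by simp) hac).reachable
  refine connected_exchangeEdges hT.connected fun u v huv => ?_
  rcases (by simpa using huv : (u = a ∧ v = b ∨ u = b ∧ v = a) ∨ u = b ∧ v = c ∨ u = c ∧ v = b)
    with (⟨rfl, rfl⟩ | ⟨rfl, rfl⟩) | ⟨rfl, rfl⟩ | ⟨rfl, rfl⟩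
  exacts [hKab, hKab.symm, hKbc, hKbc.symm]

end Exchange

section Fintype

variable [Fintype V] {G T H : SimpleGraph V} {F A : Finset (Sym2 V)} {a b c p u v x y : V}

lemma mem_branchSet : v ∈ branchSet T ↔ 3 ≤ T.degree v := by
  simp [branchSet]

lemma mem_leafSet : v ∈ leafSet T ↔ T.degree v = 1 := by
  simp [leafSet]

lemma branchSet_subset_of_degree_le (h : ∀ v, H.degree v ≤ max (T.degree v) 2) :
    branchSet H ⊆ branchSet T := fun v hv => by
  have := h v
  rw [mem_branchSet] at hv ⊢
  omega

lemma card_leafSet (hT : T.IsTree) [Nontrivial V] :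
    #(leafSet T) = 2 + ∑ v ∈ branchSet T, (T.degree v - 2) := by
  have hdeg (v : V) : T.degree v + (if T.degree v = 1 then 1 else 0) =
      2 + if 3 ≤ T.degree v then T.degree v - 2 else 0 := by
    have := hT.connected.preconnected.degree_pos_of_nontrivial v
    split_ifs <;> omega
  have hsum := Finset.sum_congr (rfl : (Finset.univ : Finset V) = _) fun v _ => hdeg v
  rw [Finset.sum_add_distrib, Finset.sum_add_distrib, ← Finset.sum_filter, ← Finset.sum_filter,
    T.sum_degrees_eq_twice_card_edges, Finset.sum_const, Finset.sum_const] at hsum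
  have hcard := hT.card_edgeFinset
  simp only [Finset.card_univ, smul_eq_mul, mul_one] at hsum
  unfold leafSet branchSet
  omega

lemma mem_support_of_isCycle_of_degree_le_two (hH : H.Connected) {z : H.Walk u u}
    (hz : z.IsCycle) (hdeg : ∀ x ∈ z.support, H.degree x ≤ 2) (v : V) : v ∈ z.support := by
  have hclosed : ∀ x ∈ z.support, ∀ y, H.Adj x y → y ∈ z.support := by
    intro x hx y hxy
    have hnbr : z.toSubgraph.neighborSet x = H.neighborSet x := by
      refine Set.eq_of_subset_of_ncard_le (Subgraph.neighborSet_subset _ _) ?_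
      rw [hz.ncard_neighborSet_toSubgraph_eq_two hx, ← Nat.card_coe_set_eq,
        Nat.card_eq_fintype_card, card_neighborSet_eq_degree]
      exact hdeg x hx
    have hxyz : y ∈ z.toSubgraph.neighborSet x := by
      rw [hnbr]
      exact hxy
    exact (Walk.mem_verts_toSubgraph z).1 (Subgraph.Adj.symm hxyz).fst_mem
  obtain ⟨q⟩ := hH u v
  exact q.rec (motive := fun s t _ => s ∈ z.support → t ∈ z.support) (fun h => h)
    (fun hst _ ih hs => ih (hclosed _ hs _ hst)) z.start_mem_support

lemma degree_eq_incidenceCount (H : SimpleGraph V) (v : V) :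
    H.degree v = incidenceCount H.edgeFinset v := by
  rw [incidenceCount, ← card_incidenceFinset_eq_degree, incidenceFinset_eq_filter]

lemma degree_exchangeEdges_add_le (hF : (F : Set (Sym2 V)) ⊆ T.edgeSet)
    (A : Finset (Sym2 V)) (v : V) :
    (exchangeEdges T F A).degree v + incidenceCount F v ≤ T.degree v + incidenceCount A v := by
  have hsub : (exchangeEdges T F A).edgeFinset ⊆ T.edgeFinset \ F ∪ A := by
    intro e he
    rw [mem_edgeFinset, exchangeEdges, edgeSet_sup, edgeSet_deleteEdges,
      edgeSet_fromEdgeSet] at he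
    simp only [Finset.mem_union, Finset.mem_sdiff, mem_edgeFinset]
    exact he.imp (fun h => ⟨h.1, h.2⟩) fun h => h.1
  have hsplit : incidenceCount (T.edgeFinset \ F) v + incidenceCount F v =
      incidenceCount T.edgeFinset v := by
    rw [incidenceCount, incidenceCount, incidenceCount, ← Finset.card_union_of_disjoint
      (Finset.disjoint_filter_filter Finset.sdiff_disjoint), ← Finset.filter_union,
      Finset.sdiff_union_of_subset fun e he => mem_edgeFinset.2 (hF he)]
  have hunion : incidenceCount (T.edgeFinset \ F ∪ A) v ≤
      incidenceCount (T.edgeFinset \ F) v + incidenceCount A v := by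
    rw [incidenceCount, incidenceCount, incidenceCount, Finset.filter_union]
    exact Finset.card_union_le _ _
  have hmono : incidenceCount (exchangeEdges T F A).edgeFinset v ≤
      incidenceCount (T.edgeFinset \ F ∪ A) v :=
    Finset.card_le_card (Finset.filter_subset_filter _ hsub)
  rw [degree_eq_incidenceCount, degree_eq_incidenceCount]
  omega

/-- An edge exchange on `T` that uses edges of `G` and raises no degree except possibly, by one,
those of leaves of `T`. Such an exchange cannot make `T` worse in the sense of `branchKey`. -/
structure IsExchange (G T : SimpleGraph V) (F A : Finset (Sym2 V)) : Prop where
  deleted_subset : (F : Set (Sym2 V)) ⊆ T.edgeSet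
  added_subset : (A : Set (Sym2 V)) ⊆ G.edgeSet
  incidenceCount_le : ∀ v,
    incidenceCount A v ≤ incidenceCount F v + if T.degree v = 1 then 1 else 0

lemma IsExchange.degree_le (hE : IsExchange G T F A) (v : V) :
    (exchangeEdges T F A).degree v ≤ max (T.degree v) 2 := by
  have hdeg := degree_exchangeEdges_add_le hE.deleted_subset A v
  have hcount := hE.incidenceCount_le v
  split_ifs at hcount <;> omega

/-! ### Optimal connected spanning subgraphs -/

/-- The number of branch vertices of `H` together with the total excess of its degrees over two,
compared lexicographically: the quantity minimised by the tree under study. -/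
noncomputable def branchKey (H : SimpleGraph V) : ℕ ×ₗ ℕ :=
  toLex (#(branchSet H), ∑ v, (H.degree v - 2))

lemma branchKey_le (h : ∀ v, H.degree v ≤ max (T.degree v) 2) : branchKey H ≤ branchKey T := by
  rw [branchKey, branchKey, Prod.Lex.toLex_le_toLex']
  exact ⟨Finset.card_le_card (branchSet_subset_of_degree_le h), fun _ =>
    Finset.sum_le_sum fun v _ => by have := h v; omega⟩

lemma branchKey_lt (h : ∀ v, H.degree v ≤ max (T.degree v) 2) (hv : 3 ≤ T.degree v)
    (hlt : H.degree v < T.degree v) : branchKey H < branchKey T := by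
  rw [branchKey, branchKey, Prod.Lex.toLex_lt_toLex']
  refine ⟨Finset.card_le_card (branchSet_subset_of_degree_le h), fun _ =>
    Finset.sum_lt_sum (fun w _ => ?_) ⟨v, Finset.mem_univ v, by omega⟩⟩
  have := h w
  omega

/-- `T` minimises `branchKey` among the connected spanning subgraphs of `G` and has a branch
vertex. No acyclicity is required: the branch vertex excludes Hamiltonian cycles, and
`IsOptimal.isTree` shows that `T` is then a tree. -/
structure IsOptimal (G T : SimpleGraph V) : Prop where
  minimalFor : MinimalFor (fun H => H ≤ G ∧ H.Connected) branchKey T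
  nonempty : (branchSet T).Nonempty

namespace IsOptimal

lemma le (hO : IsOptimal G T) : T ≤ G := hO.minimalFor.1.1

lemma connected (hO : IsOptimal G T) : T.Connected := hO.minimalFor.1.2

lemma exchange (hO : IsOptimal G T) (hE : IsExchange G T F A)
    (hc : (exchangeEdges T F A).Connected) : IsOptimal G (exchangeEdges T F A) := by
  have hle : exchangeEdges T F A ≤ G := exchangeEdges_le hO.le hE.added_subset
  have hTH : branchKey T ≤ branchKey (exchangeEdges T F A) :=
    hO.minimalFor.2 ⟨hle, hc⟩ (branchKey_le hE.degree_le)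
  refine ⟨⟨⟨hle, hc⟩, fun K hK hKH => ?_⟩, ?_⟩
  · exact (branchKey_le hE.degree_le).trans
      (hO.minimalFor.2 hK (hKH.trans (branchKey_le hE.degree_le)))
  · rw [branchKey, branchKey, Prod.Lex.toLex_le_toLex'] at hTH
    exact Finset.card_pos.1 (hO.nonempty.card_pos.trans_le hTH.1)

lemma incidenceCount_le (hO : IsOptimal G T) (hE : IsExchange G T F A)
    (hc : (exchangeEdges T F A).Connected) (hv : 3 ≤ T.degree v) :
    incidenceCount F v ≤ incidenceCount A v := by
  by_contra! hlt
  have hdeg := degree_exchangeEdges_add_le hE.deleted_subset A v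
  refine (branchKey_lt hE.degree_le hv (by omega)).not_ge ?_
  exact hO.minimalFor.2 ⟨exchangeEdges_le hO.le hE.added_subset, hc⟩ (branchKey_le hE.degree_le)

lemma degree_le_two_of_not_isBridge (hO : IsOptimal G T) (hab : T.Adj a b)
    (hbridge : ¬T.IsBridge s(a, b)) : T.degree a ≤ 2 := by
  have hreach : (T.deleteEdges {s(a, b)}).Reachable a b := by rwa [isBridge_iff, not_not] at hbridge
  rw [← Finset.coe_singleton] at hreach
  have hE : IsExchange G T {s(a, b)} ∅ := ⟨by simpa using hab, by simp, by simp [incidenceCount]⟩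
  have hc : (exchangeEdges T {s(a, b)} ∅).Connected := by
    refine connected_exchangeEdges hO.connected fun u v huv => ?_
    rcases Sym2.eq_iff.1 (Finset.mem_singleton.1 huv) with ⟨rfl, rfl⟩ | ⟨rfl, rfl⟩
    exacts [reachable_exchangeEdges hreach, (reachable_exchangeEdges hreach).symm]
  by_contra! ha
  have hcount := hO.incidenceCount_le hE hc ha
  rw [incidenceCount_singleton, if_pos (Sym2.mem_mk_left a b)] at hcount
  simp [incidenceCount] at hcount

/-- A cycle consists of non-bridges, so its vertices have degree two and it is all of `T`,
leaving no room for a branch vertex. -/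
theorem isTree (hO : IsOptimal G T) : T.IsTree := by
  refine ⟨hO.connected, fun u z hz => ?_⟩
  have hdeg : ∀ x ∈ z.support, T.degree x ≤ 2 := by
    intro x hx
    obtain ⟨e, he, hxe⟩ := (Walk.mem_support_iff_exists_mem_edges_of_not_nil hz.not_nil).1 hx
    obtain ⟨y, rfl⟩ := hxe
    have hxy := z.edges_subset_edgeSet he
    exact hO.degree_le_two_of_not_isBridge hxy fun hbridge =>
      (isBridge_iff_forall_cycle_notMem hxy).1 hbridge z hz he
  obtain ⟨v, hv⟩ := hO.nonempty
  have := hdeg v (mem_support_of_isCycle_of_degree_le_two hO.connected hz hdeg v)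
  rw [mem_branchSet] at hv
  omega

lemma mem_edgeSet_exchangeEdges {e : Sym2 V} (hO : IsOptimal G T)
    (hE : IsExchange G T F (insert e A)) (hc : (exchangeEdges T F A).Connected) :
    e ∈ (exchangeEdges T F A).edgeSet := by
  have hle : exchangeEdges T F A ≤ exchangeEdges T F (insert e A) :=
    sup_le_sup_left (fromEdgeSet_mono (by simp)) _
  have htree := (hO.exchange hE (hc.mono hle)).isTree
  have hge := (isTree_iff_minimal_connected.1 htree).2 hc hle
  refine edgeSet_mono hge ?_
  have heG : e ∈ G.edgeSet := hE.added_subset (by simp)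
  simp [exchangeEdges, G.not_isDiag_of_mem_edgeSet heG]

lemma card_branchSet_le (hO : IsOptimal G T) (hH : H ≤ G) (hc : H.Connected) :
    #(branchSet T) ≤ #(branchSet H) := by
  by_contra! hlt
  have hkey : branchKey H < branchKey T := Prod.Lex.toLex_lt_toLex.2 (.inl hlt)
  exact hkey.not_ge (hO.minimalFor.2 ⟨hH, hc⟩ hkey.le)

end IsOptimal

lemma exists_isOptimal_of_forall_lt {k : ℕ} (hG : G.Connected)
    (h : ∀ T ≤ G, T.IsTree → k < #(branchSet T)) :
    ∃ T, IsOptimal G T ∧ k < #(branchSet T) := by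
  obtain ⟨T, hmin⟩ := exists_minimalFor_of_wellFoundedLT
    (fun H => H ≤ G ∧ H.Connected) branchKey ⟨G, le_rfl, hG⟩
  obtain ⟨T', hT'T, hT'⟩ := hmin.1.2.exists_isTree_le
  have hsub : branchSet T' ⊆ branchSet T := branchSet_subset_of_degree_le fun v =>
    (degree_le_of_le hT'T).trans (le_max_left _ _)
  have hk : k < #(branchSet T) :=
    (h T' (hT'T.trans hmin.1.1) hT').trans_le (Finset.card_le_card hsub)
  exact ⟨T, ⟨hmin, Finset.card_pos.1 (by omega)⟩, hk⟩

/-! ### Oblique leaves -/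

/-- The leaf `x` of `T` is an oblique neighbour of the edge `ab`: it lies on the side of `a` and
is adjacent in `G` to the far end `b`. In contrast to `IsObliqueNbr`, the edge is directed and its
far end is singled out by `edgeSide` instead of distances. -/
structure IsObliqueLeaf (G T : SimpleGraph V) (x a b : V) : Prop where
  tree_adj : T.Adj a b
  degree_eq_one : T.degree x = 1
  mem_edgeSide : x ∈ edgeSide T a b
  adj : G.Adj x b

namespace IsOptimal

lemma not_adj_of_degree_eq_one (hO : IsOptimal G T) (hx : T.degree x = 1)
    (hy : T.degree y = 1) : ¬G.Adj x y := by
  intro hxy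
  have hE : IsExchange G T ∅ (insert s(x, y) ∅) := by
    refine ⟨by simp, by simpa using hxy, fun v => ?_⟩
    rw [insert_empty_eq, incidenceCount_singleton]
    simp only [Sym2.mem_iff]
    grind
  have hTxy : T.Adj x y := by
    have hT : exchangeEdges T ∅ ∅ = T := by simp [exchangeEdges]
    have := hO.mem_edgeSet_exchangeEdges hE (hT.symm ▸ hO.connected)
    rwa [hT] at this
  obtain ⟨v, hv⟩ := hO.nonempty
  rw [mem_branchSet] at hv
  have hvxy := mem_edgeSide_or_mem_edgeSide_swap hO.isTree x y v
  rw [edgeSide_eq_singleton_of_degree_eq_one hx hTxy,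
    edgeSide_eq_singleton_of_degree_eq_one hy hTxy.symm] at hvxy
  rcases hvxy with rfl | rfl <;> omega

lemma not_adj_of_three_le_degree (hO : IsOptimal G T) (hab : T.Adj a b) (ha : 3 ≤ T.degree a)
    (hx : T.degree x = 1) (hxa : x ∈ edgeSide T a b) : ¬G.Adj x b := by
  intro hxb
  have hE : IsExchange G T {s(a, b)} {s(x, b)} := by
    refine ⟨by simpa using hab, by simpa using hxb, fun v => ?_⟩
    simp only [incidenceCount_singleton, Sym2.mem_iff]
    grind
  have hcount := hO.incidenceCount_le hE
    (connected_exchangeEdges_singleton hO.connected hxa hxb.ne) ha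
  simp only [incidenceCount_singleton, Sym2.mem_iff] at hcount
  have := hab.ne
  grind

/-- Otherwise trading `ab` for `xb` leaves room for the extra edge `ya`. -/
lemma adj_of_isObliqueLeaf (hO : IsOptimal G T) (hx : IsObliqueLeaf G T x a b)
    (hy : T.degree y = 1) (hxy : x ≠ y) (hya : G.Adj y a) : T.Adj y a := by
  have hE : IsExchange G T {s(a, b)} (insert s(y, a) {s(x, b)}) := by
    refine ⟨by simpa using hx.tree_adj, ?_, fun v => (incidenceCount_insert_le _ _ v).trans ?_⟩
    · simp [Set.insert_subset_iff, hya, hx.adj]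
    · simp only [incidenceCount_singleton, Sym2.mem_iff]
      have := hx.degree_eq_one
      have := hx.tree_adj.ne
      grind
  have hmem := hO.mem_edgeSet_exchangeEdges hE
    (connected_exchangeEdges_singleton hO.connected hx.mem_edgeSide hx.adj.ne)
  rcases hmem with h | h
  · exact (deleteEdges_adj.1 h).1
  · rcases Sym2.eq_iff.1 (by simpa using h.1 : s(y, a) = s(x, b)) with ⟨h, -⟩ | ⟨rfl, rfl⟩
    · exact absurd h.symm hxy
    · exact hx.tree_adj.symm

lemma not_isObliqueLeaf_swap (hO : IsOptimal G T) (hx : IsObliqueLeaf G T x a b) :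
    ¬IsObliqueLeaf G T y b a := by
  intro hy
  have hacyc := hO.isTree.isAcyclic
  have hxy : x ≠ y := (disjoint_edgeSide_swap hacyc hx.tree_adj).ne_of_mem
    hx.mem_edgeSide hy.mem_edgeSide
  have hya := hO.adj_of_isObliqueLeaf hx hy.degree_eq_one hxy hy.adj
  obtain rfl : y = b :=
    eq_of_mem_edgeSide hacyc hya hy.tree_adj (left_mem_edgeSide T y a) hy.mem_edgeSide
  exact hO.not_adj_of_degree_eq_one hx.degree_eq_one hy.degree_eq_one hx.adj

end IsOptimal

namespace IsObliqueLeaf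

lemma degree_ne_one (hx : IsObliqueLeaf G T x a b) (hy : IsObliqueLeaf G T y a b)
    (hxy : x ≠ y) : T.degree a ≠ 1 := by
  intro ha
  have hside := edgeSide_eq_singleton_of_degree_eq_one ha hx.tree_adj
  have hxa : x = a := by simpa [hside] using hx.mem_edgeSide
  have hya : y = a := by simpa [hside] using hy.mem_edgeSide
  exact hxy (hxa.trans hya.symm)

lemma not_tree_adj (hO : IsOptimal G T) (hx : IsObliqueLeaf G T x a b)
    (hy : IsObliqueLeaf G T y a b) (hxy : x ≠ y) : ¬T.Adj x b := by
  intro hxb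
  have hxa : x = a := eq_of_mem_edgeSide hO.isTree.isAcyclic hxb hx.tree_adj
    (left_mem_edgeSide T x b) hx.mem_edgeSide
  exact hx.degree_ne_one hy hxy (hxa ▸ hx.degree_eq_one)

lemma not_adj_of_adj (hO : IsOptimal G T) (hx : IsObliqueLeaf G T x a b)
    (hy : IsObliqueLeaf G T y a b) (hxy : x ≠ y) (hbc : T.Adj b c) (hac : a ≠ c) :
    ¬G.Adj x c := by
  intro hxc
  have hxbc : IsObliqueLeaf G T x b c := ⟨hbc, hx.degree_eq_one,
    edgeSide_subset_edgeSide hO.isTree.isAcyclic hx.tree_adj hac hx.mem_edgeSide, hxc⟩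
  exact hy.not_tree_adj hO hx hxy.symm (hO.adj_of_isObliqueLeaf hxbc hy.degree_eq_one hxy hy.adj)

/-- Otherwise trading `ab`, `bc` for `ac`, `xb` leaves room for the extra edge `yb`. -/
lemma not_adj_left_of_adj (hO : IsOptimal G T) (hx : IsObliqueLeaf G T x a b)
    (hy : IsObliqueLeaf G T y a b) (hxy : x ≠ y) (hbc : T.Adj b c) (hac : a ≠ c) :
    ¬G.Adj a c := by
  intro hGac
  have hab := hx.tree_adj
  have ha := hx.degree_ne_one hy hxy
  have hE : IsExchange G T {s(a, b), s(b, c)} (insert s(y, b) {s(a, c), s(x, b)}) := by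
    refine ⟨?_, ?_, fun v => (incidenceCount_insert_le _ _ v).trans ?_⟩
    · simp [Set.insert_subset_iff, hab, hbc]
    · simp [Set.insert_subset_iff, hy.adj, hx.adj, hGac]
    · have hF := incidenceCount_insert (E := {s(b, c)}) (e := s(a, b))
        (by simp [hab.ne, hac]) v
      have hA := incidenceCount_insert_le {s(x, b)} s(a, c) v
      simp only [incidenceCount_singleton, Sym2.mem_iff] at hF hA ⊢
      have := hx.degree_eq_one
      have := hy.degree_eq_one
      have := hab.ne
      have := hbc.ne
      grind
  have hmem := hO.mem_edgeSet_exchangeEdges hE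
    (connected_exchangeEdges_pair hO.isTree hab hbc hac hx.mem_edgeSide hx.adj.ne)
  rcases hmem with h | h
  · exact hy.not_tree_adj hO hx hxy.symm (deleteEdges_adj.1 h).1
  · have hyb : s(y, b) = s(a, c) ∨ s(y, b) = s(x, b) := by simpa using h.1
    have := hab.ne
    have := hbc.ne
    have := hy.degree_eq_one
    grind

lemma not_adj_left (hO : IsOptimal G T) (hx : IsObliqueLeaf G T x a b)
    (hy : IsObliqueLeaf G T y a b) (hxy : x ≠ y) : ¬G.Adj x a := by
  intro hxa
  have hacyc := hO.isTree.isAcyclic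
  have hTxa := hO.adj_of_isObliqueLeaf hy hx.degree_eq_one hxy.symm hxa
  have hay : a ≠ y := fun h => hx.degree_ne_one hy hxy (h ▸ hy.degree_eq_one)
  obtain ⟨t, hta, hyt⟩ := exists_adj_mem_edgeSide hO.connected hay
  have hxt : x ≠ t := by
    rintro rfl
    rw [edgeSide_eq_singleton_of_degree_eq_one hx.degree_eq_one hta] at hyt
    exact hxy hyt.symm
  have hbt : b ≠ t := by
    rintro rfl
    exact Set.disjoint_left.1 (disjoint_edgeSide_swap hacyc hta) hyt hy.mem_edgeSide
  have ha := three_le_degree_of_adj hTxa.symm hx.tree_adj hta.symm hx.adj.ne hxt hbt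
  exact hO.not_adj_of_three_le_degree hx.tree_adj ha hy.degree_eq_one hy.mem_edgeSide hy.adj

/-- For distinct `x` and `y`, a further neighbour `c` of `b` would complete an induced `K_{1,4}`
with centre `b` and leaves `x`, `y`, `a`, `c`. -/
theorem eq (hO : IsOptimal G T) (hK : K14Free G) (hx : IsObliqueLeaf G T x a b)
    (hy : IsObliqueLeaf G T y a b) : x = y := by
  by_contra hxy
  have ha := hx.degree_ne_one hy hxy
  have hb : T.degree b ≠ 1 := fun hb =>
    hO.not_adj_of_degree_eq_one hx.degree_eq_one hb hx.adj
  obtain ⟨c, hbc, hca⟩ := exists_adj_ne_of_degree_ne_one hx.tree_adj.symm hb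
  have hleaf {z : V} (hz : IsObliqueLeaf G T z a b) : z ≠ a ∧ z ≠ c := by
    refine ⟨fun h => ha (h ▸ hz.degree_eq_one), ?_⟩
    rintro rfl
    exact hca (eq_of_mem_edgeSide hO.isTree.isAcyclic hbc.symm hz.tree_adj
      (left_mem_edgeSide T z b) hz.mem_edgeSide)
  exact hK ⟨b, x, y, a, c, hxy, (hleaf hx).1, (hleaf hx).2, (hleaf hy).1, (hleaf hy).2, hca.symm,
    hx.adj.symm, hy.adj.symm, (hO.le hx.tree_adj).symm, hO.le hbc,
    hO.not_adj_of_degree_eq_one hx.degree_eq_one hy.degree_eq_one,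
    hx.not_adj_left hO hy hxy, hx.not_adj_of_adj hO hy hxy hbc hca.symm,
    hy.not_adj_left hO hx (Ne.symm hxy), hy.not_adj_of_adj hO hx (Ne.symm hxy) hbc hca.symm,
    hx.not_adj_left_of_adj hO hy hxy hbc hca.symm⟩

end IsObliqueLeaf

/-! ### Arms and stray leaves -/

/-- The side of `u` of the edge `up` of `T` is a path attached to the rest of `T` at `p`, whose
other end is the leaf `x`. Only the degrees on this side are recorded. -/
structure IsArm (T : SimpleGraph V) (x u p : V) : Prop where
  degree_eq_one : T.degree x = 1
  adj : T.Adj u p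
  mem_edgeSide : x ∈ edgeSide T u p
  eq_or_degree_eq_two : ∀ w ∈ edgeSide T u p, w = x ∨ T.degree w = 2

namespace IsArm

lemma eq (hx : IsArm T x u p) (hy : IsArm T y u p) : x = y := by
  rcases hx.eq_or_degree_eq_two y hy.mem_edgeSide with h | h
  · exact h.symm
  · have := hy.degree_eq_one
    omega

lemma notMem_edgeSide (hx : IsArm T x u p) (hv : 3 ≤ T.degree v) : v ∉ edgeSide T u p := by
  intro hvu
  have := hx.degree_eq_one
  rcases hx.eq_or_degree_eq_two v hvu with rfl | h <;> omega

lemma of_degree_eq_one (hx : T.degree x = 1) (hxp : T.Adj x p) : IsArm T x x p :=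
  ⟨hx, hxp, left_mem_edgeSide T x p, fun w hw =>
    .inl (by rwa [edgeSide_eq_singleton_of_degree_eq_one hx hxp] at hw)⟩

lemma degree_ne_one (hT : T.Connected) (hB : (branchSet T).Nonempty) (hx : IsArm T x u p) :
    T.degree p ≠ 1 := by
  intro hp
  obtain ⟨v, hv⟩ := hB
  rw [mem_branchSet] at hv
  have hpv : p ≠ v := by rintro rfl; omega
  obtain ⟨a, hap, hva⟩ := exists_adj_mem_edgeSide hT hpv
  obtain rfl : a = u :=
    (degree_eq_one_iff_existsUnique_adj.1 hp).unique hap.symm hx.adj.symm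
  exact hx.notMem_edgeSide hv hva

lemma extend (hT : T.IsTree) (hx : IsArm T x u p) (hp : T.degree p = 2) (hpc : T.Adj p c)
    (huc : u ≠ c) : IsArm T x p c := by
  have hacyc := hT.isAcyclic
  refine ⟨hx.degree_eq_one, hpc, edgeSide_subset_edgeSide hacyc hx.adj huc hx.mem_edgeSide,
    fun w hw => ?_⟩
  by_cases hpw : p = w
  · exact .inr (hpw ▸ hp)
  obtain ⟨a, hap, hwa⟩ := exists_adj_mem_edgeSide hT.connected hpw
  have hac : a ≠ c := by
    rintro rfl
    exact Set.disjoint_left.1 (disjoint_edgeSide_swap hacyc hpc) hw hwa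
  obtain rfl : a = u := by
    by_contra hau
    have := three_le_degree_of_adj hap.symm hpc hx.adj.symm hac hau huc.symm
    omega
  exact hx.eq_or_degree_eq_two w hwa

end IsArm

/-- An arm of `x` with as many vertices as possible ends at a branch vertex. -/
lemma exists_isArm (hT : T.IsTree) (hB : (branchSet T).Nonempty) (hx : T.degree x = 1) :
    ∃ u p, IsArm T x u p ∧ 3 ≤ T.degree p := by
  obtain ⟨y, hxy⟩ := (degree_pos_iff_exists_adj T x).1 (by omega)
  obtain ⟨⟨u, p⟩, hup, hmax⟩ := Set.exists_max_image {d : V × V | IsArm T x d.1 d.2}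
    (fun d => (edgeSide T d.1 d.2).ncard) (Set.toFinite _) ⟨(x, y), .of_degree_eq_one hx hxy⟩
  replace hup : IsArm T x u p := hup
  refine ⟨u, p, hup, ?_⟩
  by_contra! hp
  have hp_pos : 0 < T.degree p := (degree_pos_iff_exists_adj T p).2 ⟨u, hup.adj.symm⟩
  have hp1 := hup.degree_ne_one hT.connected hB
  obtain ⟨c, hpc, hcu⟩ := exists_adj_ne_of_degree_ne_one hup.adj.symm hp1
  have hlt : (edgeSide T u p).ncard < (edgeSide T p c).ncard := by
    refine Set.ncard_lt_ncard
      ⟨edgeSide_subset_edgeSide hT.isAcyclic hup.adj hcu.symm, fun h => ?_⟩ (Set.toFinite _)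
    exact right_notMem_edgeSide hT.isAcyclic hup.adj (h (left_mem_edgeSide T p c))
  have hp2 : T.degree p = 2 := by omega
  exact hlt.not_ge (hmax (p, c) (hup.extend hT hp2 hpc hcu.symm))

/-- The leaf `x` of `T`, whose arm ends at the branch vertex `p`, is adjacent in `G` to another
branch vertex `c`. The edge `xc` can then replace the edge `up` by which the arm is attached. -/
structure IsStrayLeaf (G T : SimpleGraph V) (x u p c : V) : Prop extends IsArm T x u p where
  three_le_degree : 3 ≤ T.degree p
  three_le_degree' : 3 ≤ T.degree c
  ne : c ≠ p
  adj' : G.Adj x c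

section Reroute

variable {Q : Finset V} {next target : V → V}

lemma connected_exchangeEdges_image (hT : T.IsTree)
    (h : ∀ x ∈ Q, IsStrayLeaf G T x (next x) p (target x)) :
    (exchangeEdges T (Q.image fun x => s(next x, p))
      (Q.image fun x => s(x, target x))).Connected := by
  set K := exchangeEdges T (Q.image fun x => s(next x, p)) (Q.image fun x => s(x, target x))
  have hdel {v w : V} (hvw : ∀ y ∈ Q, (T.deleteEdges {s(next y, p)}).Reachable v w) :
      K.Reachable v w := by
    refine reachable_exchangeEdges
      (reachable_deleteEdges_of_forall hT.isAcyclic (hT.connected v w) fun e he => ?_)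
    obtain ⟨y, hy, rfl⟩ := Finset.mem_image.1 he
    exact hvw y hy
  have hreach : ∀ x ∈ Q, K.Reachable (next x) p := fun x hx => by
    have harm : K.Reachable (next x) x := hdel fun y _ =>
      reachable_deleteEdges_of_adj hT.isAcyclic (h x hx).adj (left_mem_edgeSide T _ p)
        (h x hx).mem_edgeSide _
    have hadj : K.Adj x (target x) :=
      exchangeEdges_adj_of_mem (Finset.mem_image_of_mem _ hx) (h x hx).adj'.ne
    have hrest : K.Reachable p (target x) := hdel fun y hy => by
      rw [Sym2.eq_swap]
      exact (mem_edgeSide_or_mem_edgeSide_swap hT (next y) p (target x)).resolve_left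
        ((h y hy).notMem_edgeSide (h x hx).three_le_degree')
    exact harm.trans (hadj.reachable.trans hrest.symm)
  refine connected_exchangeEdges hT.connected fun a b hab => ?_
  obtain ⟨x, hx, hxe⟩ := Finset.mem_image.1 hab
  rcases Sym2.eq_iff.1 hxe with ⟨rfl, rfl⟩ | ⟨rfl, rfl⟩
  exacts [hreach x hx, (hreach x hx).symm]

lemma incidenceCount_image_mk (h : ∀ x ∈ Q, IsStrayLeaf G T x (next x) p (target x)) :
    incidenceCount (Q.image fun x => s(next x, p)) p = #Q := by
  rw [incidenceCount, Finset.filter_true_of_mem, Finset.card_image_of_injOn]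
  · intro x hx y hy hxy
    have hnext : next x = next y := Sym2.congr_left.1 hxy
    exact (h x hx).eq (hnext ▸ (h y hy).toIsArm)
  · simp

lemma incidenceCount_image_mk_self (h : ∀ x ∈ Q, IsStrayLeaf G T x (next x) p (target x)) :
    incidenceCount (Q.image fun x => s(x, target x)) p = 0 := by
  rw [incidenceCount, Finset.card_eq_zero, Finset.filter_eq_empty_iff, Finset.forall_mem_image]
  intro x hx hpx
  have hp := (h x hx).three_le_degree
  have hx1 := (h x hx).degree_eq_one
  rcases Sym2.mem_iff.1 hpx with rfl | hpx
  · omega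
  · exact (h x hx).ne hpx.symm

lemma incidenceCount_image_mk_le (h : ∀ x ∈ Q, IsStrayLeaf G T x (next x) p (target x))
    (hv : T.degree v ≤ 2) :
    incidenceCount (Q.image fun x => s(x, target x)) v ≤ if T.degree v = 1 then 1 else 0 := by
  have heq : ∀ e ∈ Q.image (fun x => s(x, target x)), v ∈ e →
      T.degree v = 1 ∧ e = s(v, target v) := by
    rw [Finset.forall_mem_image]
    intro x hx hvx
    have hc := (h x hx).three_le_degree'
    rcases Sym2.mem_iff.1 hvx with rfl | rfl
    · exact ⟨(h v hx).degree_eq_one, rfl⟩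
    · omega
  split_ifs with hv1
  · refine Finset.card_le_one.2 fun e he f hf => ?_
    rw [Finset.mem_filter] at he hf
    exact (heq e he.1 he.2).2.trans (heq f hf.1 hf.2).2.symm
  · rw [incidenceCount, Nat.le_zero, Finset.card_eq_zero, Finset.filter_eq_empty_iff]
    exact fun e he hve => hv1 (heq e he hve).1

/-- Rerouting more arms would leave `p` with degree at most two and create no branch vertex. -/
lemma IsOptimal.card_add_three_le_degree (hO : IsOptimal G T) (hp : 3 ≤ T.degree p)
    (h : ∀ x ∈ Q, IsStrayLeaf G T x (next x) p (target x)) : #Q + 3 ≤ T.degree p := by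
  by_contra! hlt
  set F := Q.image fun x => s(next x, p)
  set A := Q.image fun x => s(x, target x)
  have hF : (F : Set (Sym2 V)) ⊆ T.edgeSet := fun e he => by
    obtain ⟨x, hx, rfl⟩ := Finset.mem_image.1 he
    exact (h x hx).adj
  have hA : (A : Set (Sym2 V)) ⊆ G.edgeSet := fun e he => by
    obtain ⟨x, hx, rfl⟩ := Finset.mem_image.1 he
    exact (h x hx).adj'
  have hsub : branchSet (exchangeEdges T F A) ⊆ (branchSet T).erase p := by
    intro v hv
    rw [Finset.mem_erase, mem_branchSet]
    rw [mem_branchSet] at hv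
    have hdeg := degree_exchangeEdges_add_le hF A v
    constructor
    · rintro rfl
      rw [incidenceCount_image_mk h, incidenceCount_image_mk_self h] at hdeg
      omega
    · by_contra! hv2
      have hcount : incidenceCount A v ≤ if T.degree v = 1 then 1 else 0 :=
        incidenceCount_image_mk_le h (Nat.le_of_lt_succ hv2)
      split_ifs at hcount <;> omega
  have hcard := hO.card_branchSet_le (exchangeEdges_le hO.le hA)
    (connected_exchangeEdges_image hO.isTree h)
  exact hcard.not_gt (Finset.card_lt_card (hsub.trans_ssubset
    (Finset.erase_ssubset (mem_branchSet.2 hp))))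

end Reroute

/-- The set of leaves of `T` whose arm ends at some branch vertex and which are adjacent in `G` to
a different one; the other leaves are those used in the final count. -/
noncomputable def strayLeaves (G T : SimpleGraph V) : Finset V :=
  {x | ∃ u p c, IsStrayLeaf G T x u p c}

lemma mem_strayLeaves : x ∈ strayLeaves G T ↔ ∃ u p c, IsStrayLeaf G T x u p c := by
  simp [strayLeaves]

lemma IsOptimal.card_strayLeaves_le (hO : IsOptimal G T) :
    #(strayLeaves G T) ≤ ∑ p ∈ branchSet T, (T.degree p - 3) := by
  choose! next base target h using fun x (hx : x ∈ strayLeaves G T) => mem_strayLeaves.1 hx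
  rw [Finset.card_eq_sum_card_fiberwise (f := base) (t := branchSet T) fun x hx =>
    mem_branchSet.2 (h x hx).three_le_degree]
  refine Finset.sum_le_sum fun p hp => ?_
  have hfiber : ∀ x ∈ {x ∈ strayLeaves G T | base x = p},
      IsStrayLeaf G T x (next x) p (target x) := by
    intro x hx
    rw [Finset.mem_filter] at hx
    exact hx.2 ▸ h x hx.1
  exact Nat.le_sub_of_add_le (hO.card_add_three_le_degree (mem_branchSet.1 hp) hfiber)

lemma IsOptimal.card_branchSet_add_two_le (hO : IsOptimal G T) :
    #(branchSet T) + 2 ≤ #(leafSet T \ strayLeaves G T) := by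
  obtain ⟨v, hv⟩ := hO.nonempty
  obtain ⟨w, hvw⟩ := (degree_pos_iff_exists_adj T v).1 (by rw [mem_branchSet] at hv; omega)
  have : Nontrivial V := ⟨v, w, hvw.ne⟩
  have hleaf := card_leafSet hO.isTree
  have hstray := hO.card_strayLeaves_le
  have hsum : ∑ p ∈ branchSet T, (T.degree p - 2) =
      ∑ p ∈ branchSet T, (T.degree p - 3) + #(branchSet T) := by
    rw [Finset.card_eq_sum_ones, ← Finset.sum_add_distrib]
    refine Finset.sum_congr rfl fun p hp => ?_
    rw [mem_branchSet] at hp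
    omega
  have := Finset.le_card_sdiff (strayLeaves G T) (leafSet T)
  omega

/-! ### The degree sum of leaves -/

lemma IsOptimal.injOn_mk_toward_of_degree_eq_one (hO : IsOptimal G T) (hK : K14Free G) :
    Set.InjOn (fun d : Σ _ : V, V => s(d.2, toward T d.2 d.1))
      {d | T.degree d.1 = 1 ∧ G.Adj d.1 d.2} := by
  rintro ⟨x, v⟩ ⟨hx, hxv⟩ ⟨y, w⟩ ⟨hy, hyw⟩ hvw
  rcases mk_toward_eq_mk_toward hO.connected hxv.ne' hyw.ne' hvw with ⟨rfl, h⟩ | ⟨hwv, hxw, hyv⟩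
  · obtain ⟨hadj, hxt⟩ := toward_spec hO.connected hxv.ne'
    obtain ⟨-, hyt⟩ := toward_spec hO.connected hyw.ne'
    have hx' : IsObliqueLeaf G T x (toward T v x) v := ⟨hadj, hx, hxt, hxv⟩
    have hy' : IsObliqueLeaf G T y (toward T v x) v := ⟨hadj, hy, h ▸ hyt, hyw⟩
    obtain rfl := hx'.eq hO hK hy'
    rfl
  · have hx' : IsObliqueLeaf G T x w v := ⟨hwv, hx, hxw, hxv⟩
    have hy' : IsObliqueLeaf G T y v w := ⟨hwv.symm, hy, hyv, hyw⟩
    exact absurd hy' (hO.not_isObliqueLeaf_swap hx')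

lemma IsOptimal.mk_toward_ne_mk_toward (hO : IsOptimal G T) (hx : x ∈ leafSet T \ strayLeaves G T)
    (hxv : G.Adj x v) (hc : 3 ≤ T.degree c) (hu : 3 ≤ T.degree u) (hcu : c ≠ u) :
    s(v, toward T v x) ≠ s(c, toward T c u) := by
  intro h
  rw [Finset.mem_sdiff, mem_leafSet] at hx
  obtain ⟨hx1, hstray⟩ := hx
  rcases mk_toward_eq_mk_toward hO.connected hxv.ne' hcu h with ⟨rfl, hto⟩ | ⟨hcv, hxc, -⟩
  · obtain ⟨w, p, harm, hp⟩ := exists_isArm hO.isTree hO.nonempty hx1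
    by_cases hvp : v = p
    · subst hvp
      obtain ⟨hadj, hxt⟩ := toward_spec hO.connected hxv.ne'
      obtain ⟨-, hut⟩ := toward_spec hO.connected hcu
      have hw : toward T v x = w :=
        eq_of_mem_edgeSide hO.isTree.isAcyclic hadj harm.adj hxt harm.mem_edgeSide
      rw [← hto, hw] at hut
      exact harm.notMem_edgeSide hu hut
    · exact hstray (mem_strayLeaves.2 ⟨w, p, v, harm, hp, hc, hvp, hxv⟩)
  · exact hO.not_adj_of_three_le_degree hcv hc hx1 hxc hxv

lemma IsOptimal.sum_degree_add_card_branchSet_le (hO : IsOptimal G T) (hK : K14Free G)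
    {S : Finset V} (hS : S ⊆ leafSet T \ strayLeaves G T) :
    ∑ x ∈ S, G.degree x + #(branchSet T) ≤ Fintype.card V := by
  obtain ⟨r, hr⟩ := hO.nonempty
  have hT := hO.connected
  have hleaf : ∀ x ∈ S, T.degree x = 1 := fun x hx =>
    mem_leafSet.1 (Finset.mem_sdiff.1 (hS hx)).1
  set D : Finset (Σ _ : V, V) := S.sigma fun x => G.neighborFinset x
  have hD {d : Σ _ : V, V} (hd : d ∈ D) : d.1 ∈ S ∧ G.Adj d.1 d.2 := by simpa [D] using hd
  set E := D.image fun d => s(d.2, toward T d.2 d.1)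
  set E' := ((branchSet T).erase r).image fun c => s(c, toward T c r)
  have hE : #E = ∑ x ∈ S, G.degree x := by
    rw [Finset.card_image_of_injOn, Finset.card_sigma]
    · rfl
    · refine (hO.injOn_mk_toward_of_degree_eq_one hK).mono fun d hd => ?_
      exact ⟨hleaf _ (hD hd).1, (hD hd).2⟩
  have hE' : #E' + 1 = #(branchSet T) := by
    rw [Finset.card_image_of_injOn, Finset.card_erase_add_one hr]
    exact (injOn_mk_toward hO.isTree r).mono fun c hc => Finset.ne_of_mem_erase hc
  have hdisj : Disjoint E E' := by
    rw [Finset.disjoint_left, Finset.forall_mem_image]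
    intro d hd hdE'
    obtain ⟨c, hc, hcd⟩ := Finset.mem_image.1 hdE'
    rw [Finset.mem_erase, mem_branchSet] at hc
    exact hO.mk_toward_ne_mk_toward (hS (hD hd).1) (hD hd).2 hc.2 (mem_branchSet.1 hr) hc.1
      hcd.symm
  have hsub : E ∪ E' ⊆ T.edgeFinset := by
    refine Finset.union_subset ?_ ?_ <;> refine Finset.image_subset_iff.2 fun d hd => ?_
    · exact mem_edgeFinset.2 (toward_spec hT (hD hd).2.ne').1.symm
    · exact mem_edgeFinset.2 (toward_spec hT (Finset.ne_of_mem_erase hd)).1.symm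
  have hcard := Finset.card_le_card hsub
  rw [Finset.card_union_of_disjoint hdisj] at hcard
  have := hO.isTree.card_edgeFinset
  omega

end Fintype

/-- For `k = 0` the tree is a Hamiltonian path of `G`. -/
theorem stmt3_general {V : Type*} [Fintype V] (k : ℕ) (G : SimpleGraph V) (hG : G.Connected)
    (hK : K14Free G)
    (hσ : ∀ s : Finset V, IsIndepFinset G s → s.card = k + 3 →
      Fintype.card V - k ≤ ∑ v ∈ s, G.degree v) :
    ∃ T : SimpleGraph V, T ≤ G ∧ T.IsTree ∧ (branchSet T).card ≤ k := by
  by_contra! hno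
  obtain ⟨T, hO, hk⟩ := exists_isOptimal_of_forall_lt hG hno
  have hleaves := hO.card_branchSet_add_two_le
  obtain ⟨S, hS, hcard⟩ : ∃ S ⊆ leafSet T \ strayLeaves G T, #S = k + 3 :=
    Finset.exists_subset_card_eq (by omega)
  have hleaf : ∀ x ∈ S, T.degree x = 1 := fun x hx =>
    mem_leafSet.1 (Finset.mem_sdiff.1 (hS hx)).1
  have hlower := hσ S (fun x hx y hy _ =>
    hO.not_adj_of_degree_eq_one (hleaf x hx) (hleaf y hy)) hcard
  have hupper := hO.sum_degree_add_card_branchSet_le hK hS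
  omega

/-- If `k ≥ 1` and `G` is a connected `K_{1,4}`-free graph of order `n` with
`σ_{k+3}(G) ≥ n - k`, then `G` has a spanning tree with at most `k` branch vertices. -/
theorem stmt3 {V : Type*} [Fintype V] (k : ℕ) (hk : 1 ≤ k)
    (G : SimpleGraph V) (hG : G.Connected) (hK : K14Free G)
    (hσ : ∀ s : Finset V, IsIndepFinset G s → s.card = k + 3 →
      Fintype.card V - k ≤ ∑ v ∈ s, G.degree v) :
    ∃ T : SimpleGraph V, T ≤ G ∧ T.IsTree ∧ (branchSet T).card ≤ k :=
  stmt3_general k G hG hK hσ
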